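/- Let He_n denote the probabilists' Hermite polynomials, defined by He_0 = 1 and He_{n+1}(x) = x·He_n(x) − He_n'(x), and define the Hermite functions ψ_n : ℝ → ℝ by ψ_n(x) := He_n(2√π·x)·e^{−πx²} (so ψ_n agrees, up to the positive constant factor 2^{n/2}, with the n-th eigenfunction H_n(√(2π)x)e^{−πx²} of the quantum harmonic oscillator −(1/4π²)d²/dx² + x²). Let x, y be nonzero real numbers with y = m·x for some nonzero integer m. Then (1/N)·#{0 ≤ n < N : sgn(ψ_n(x)) = sgn(ψ_n(y))} converges as N → ∞, to 1/2 + 1/(2m) if m ≡ 1 (mod 4), and to 1/2 otherwise. -/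

import Mathlib

open Filter Real MeasureTheory
open scoped Classical

noncomputable def sgn (t : ℝ) : ℝ := if 0 < t then 1 else if t < 0 then -1 else 0

/-- Probabilists' Hermite polynomials (as real functions):
`He 0 = 1`, `He (n+1) x = x * He n x - (He n)' x`. -/
noncomputable def He : ℕ → ℝ → ℝ
  | 0 => fun _ => 1
  | n + 1 => fun x => x * He n x - deriv (He n) x

/-- Hermite functions: `ψ n x = He n (2√π x) e^{-π x²}`. -/
noncomputable def ψ (n : ℕ) (x : ℝ) : ℝ :=
  He n (2 * Real.sqrt π * x) * Real.exp (-π * x ^ 2)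

/-!
With `z = 2√π x`, the `n`-th Hermite function solves `w'' + (n + 1/2 - z² / 4) w = 0`. On a
bounded interval the potential `z² / 4` is negligible against the frequency `ω = √(n + 1/2)`, so
after normalization by its data at `0` the function is close to `cos (ω z)` for even `n` and to
`sin (ω z)` for odd `n` (Grönwall's inequality in the rotating frame). By Weyl's criterion and
Fejér's theorem, whose proof is a summation by parts, `ω z` is equidistributed modulo `2π` as `n`
runs over the even or over the odd numbers. As the signs of two cosines depend continuously on the
phase off a null set, they agree for a proportion of `n` given by the correlation of the square
waves of frequencies `1` and `m`, with phase `0` for even `n` and `π / 2` for odd `n`. Translation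
by `π / 2` makes the two correlations equal if `m ≡ 1 (mod 4)` and opposite if `m ≡ 3 (mod 4)`;
for even `m` both vanish by antiperiodicity. For odd `m` the correlation of the sine waves is
`1 / m`.
-/

section HermitePolynomials

open Polynomial

theorem derivative_hermite_succ (n : ℕ) :
    derivative (hermite (n + 1)) = ((n : ℤ[X]) + 1) * hermite n := by
  induction n with
  | zero => simp
  | succ n ih =>
    have hrec : derivative (hermite (n + 2)) =
        hermite (n + 1) + X * derivative (hermite (n + 1)) -
          derivative (derivative (hermite (n + 1))) := by
      rw [hermite_succ (n + 1), derivative_sub, derivative_mul, derivative_X, one_mul]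
    have hder : derivative (((n : ℤ[X]) + 1) * hermite n) =
        ((n : ℤ[X]) + 1) * derivative (hermite n) := by
      simp [derivative_mul]
    rw [hrec, ih, hder, hermite_succ n]
    push_cast
    ring

theorem He_eq_aeval_hermite (n : ℕ) : He n = fun x => aeval x (hermite n) := by
  induction n with
  | zero => funext x; simp [He]
  | succ n ih =>
    funext x
    simp [He, ih, hermite_succ]

theorem hasDerivAt_He (n : ℕ) (x : ℝ) : HasDerivAt (He n) (x * He n x - He (n + 1) x) x := by
  have hdiff : DifferentiableAt ℝ (He n) x := by
    rw [He_eq_aeval_hermite]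
    exact Polynomial.differentiableAt_aeval (hermite n)
  simpa [He] using hdiff.hasDerivAt

theorem hasDerivAt_He_succ (n : ℕ) (x : ℝ) :
    HasDerivAt (He (n + 1)) ((n + 1) * He n x) x := by
  have hder := (hermite (n + 1)).hasDerivAt_aeval x
  rw [derivative_hermite_succ] at hder
  simpa [He_eq_aeval_hermite, -hermite_succ] using hder

theorem He_apply_zero_eq_zero_iff (n : ℕ) : He n 0 = 0 ↔ Odd n := by
  have hcoeff : He n 0 = ((hermite n).coeff 0 : ℤ) := by
    rw [He_eq_aeval_hermite, ← eq_intCast (algebraMap ℤ ℝ), coeff_zero_eq_aeval_zero']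
  rw [hcoeff, Int.cast_eq_zero]
  constructor
  · intro h
    by_contra hodd
    rw [coeff_hermite_of_even_add (by simpa using hodd)] at h
    simp [Nat.doubleFactorial_pos _ |>.ne'] at h
  · intro h
    exact coeff_hermite_of_odd_add (by simpa using h)

end HermitePolynomials

section HermiteFunctions

/-- The Hermite function `He n z * exp (-z² / 4)`, that is `ψ n` in the variable `z = 2√π x`, in
which it solves `w'' + (n + 1/2 - z² / 4) w = 0`. -/
noncomputable def hermiteFun (n : ℕ) (z : ℝ) : ℝ := He n z * exp (-(z ^ 2 / 4))

theorem ψ_eq_hermiteFun (n : ℕ) (x : ℝ) : ψ n x = hermiteFun n (2 * √π * x) := by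
  rw [ψ, hermiteFun, mul_pow, mul_pow, sq_sqrt pi_pos.le]
  ring_nf

theorem hasDerivAt_gaussian (z : ℝ) :
    HasDerivAt (fun t : ℝ => exp (-(t ^ 2 / 4))) (exp (-(z ^ 2 / 4)) * -(z / 2)) z := by
  refine ((hasDerivAt_pow 2 z).div_const 4).neg.exp.congr_deriv ?_
  simp only [Pi.neg_apply]
  push_cast
  ring

theorem hasDerivAt_hermiteFun (n : ℕ) (z : ℝ) :
    HasDerivAt (hermiteFun n) (z / 2 * hermiteFun n z - hermiteFun (n + 1) z) z := by
  refine ((hasDerivAt_He n z).mul (hasDerivAt_gaussian z)).congr_deriv ?_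
  simp only [hermiteFun]
  ring

theorem hasDerivAt_hermiteFun_succ (n : ℕ) (z : ℝ) :
    HasDerivAt (hermiteFun (n + 1))
      ((n + 1) * hermiteFun n z - z / 2 * hermiteFun (n + 1) z) z := by
  refine ((hasDerivAt_He_succ n z).mul (hasDerivAt_gaussian z)).congr_deriv ?_
  simp only [hermiteFun]
  ring

theorem hasDerivAt_deriv_hermiteFun (n : ℕ) (z : ℝ) :
    HasDerivAt (fun t => t / 2 * hermiteFun n t - hermiteFun (n + 1) t)
      ((z ^ 2 / 4 - (n + 1 / 2)) * hermiteFun n z) z := by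
  refine ((((hasDerivAt_id z).div_const 2).mul (hasDerivAt_hermiteFun n z)).sub
    (hasDerivAt_hermiteFun_succ n z)).congr_deriv ?_
  simp only [id]
  ring

theorem hermiteFun_apply_zero_eq_zero_iff (n : ℕ) : hermiteFun n 0 = 0 ↔ Odd n := by
  simp [hermiteFun, He_apply_zero_eq_zero_iff]

end HermiteFunctions

section OscillatorComparison

theorem norm_sub_le_of_norm_deriv_le_mul_norm {E : Type*} [NormedAddCommGroup E] [NormedSpace ℝ E]
    {g g' : ℝ → E} {K a b : ℝ} (hK : 0 ≤ K) (hg : ∀ t ∈ Set.uIcc a b, HasDerivAt g (g' t) t)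
    (hbound : ∀ t ∈ Set.uIcc a b, ‖g' t‖ ≤ K * ‖g t‖) :
    ‖g b - g a‖ ≤ ‖g a‖ * (exp (K * |b - a|) - 1) := by
  -- The parameter `s` runs over `[0, 1]` to treat `a ≤ b` and `b ≤ a` at once.
  have hmem {s : ℝ} (hs : s ∈ Set.Icc (0 : ℝ) 1) : a + s * (b - a) ∈ Set.uIcc a b := by
    rw [← segment_eq_uIcc]
    exact ⟨1 - s, s, sub_nonneg.2 hs.2, hs.1, by ring, by simp only [smul_eq_mul]; ring⟩
  have hder {s : ℝ} (hs : s ∈ Set.Icc (0 : ℝ) 1) :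
      HasDerivAt (fun s => g (a + s * (b - a)) - g a) ((b - a) • g' (a + s * (b - a))) s := by
    have hline : HasDerivAt (fun s => a + s * (b - a)) (b - a) s := by
      simpa using ((hasDerivAt_id s).mul_const (b - a)).const_add a
    exact ((hg _ (hmem hs)).scomp s hline).sub_const (g a)
  have hder_le {s : ℝ} (hs : s ∈ Set.Icc (0 : ℝ) 1) : ‖(b - a) • g' (a + s * (b - a))‖ ≤
      K * |b - a| * ‖g (a + s * (b - a)) - g a‖ + K * |b - a| * ‖g a‖ :=
    calc ‖(b - a) • g' (a + s * (b - a))‖ ≤ |b - a| * (K * ‖g (a + s * (b - a))‖) := by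
          rw [norm_smul, Real.norm_eq_abs]
          gcongr
          exact hbound _ (hmem hs)
      _ ≤ |b - a| * (K * (‖g (a + s * (b - a)) - g a‖ + ‖g a‖)) := by
          gcongr
          exact norm_le_norm_sub_add _ _
      _ = _ := by ring
  have hgronwall := norm_le_gronwallBound_of_norm_deriv_right_le
    (δ := 0) (K := K * |b - a|) (ε := K * |b - a| * ‖g a‖)
    (fun s hs => (hder hs).continuousAt.continuousWithinAt)
    (fun s hs => (hder (Set.Ico_subset_Icc_self hs)).hasDerivWithinAt) (by simp)
    (fun s hs => hder_le (Set.Ico_subset_Icc_self hs)) 1 (Set.right_mem_Icc.2 zero_le_one)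
  rcases eq_or_ne (K * |b - a|) 0 with h | h
  · simpa [h, gronwallBound_K0] using hgronwall
  · simpa [gronwallBound_of_K_ne_0 h, mul_div_cancel_left₀ _ h] using hgronwall

/-- The state `w - i w' / ω` of an oscillator of frequency `ω` with position `w` and velocity `w'`,
seen in the frame rotating with the free motion `w'' = -ω² w`, under which it is constant. -/
noncomputable def rotatingState (w w' : ℝ → ℝ) (ω t : ℝ) : ℂ :=
  (w t - (w' t / ω : ℝ) * Complex.I) * Complex.exp ((-(ω * t) : ℝ) * Complex.I)

variable {w w' : ℝ → ℝ} {ω : ℝ}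

theorem norm_rotatingState (w w' : ℝ → ℝ) (ω t : ℝ) :
    ‖rotatingState w w' ω t‖ = ‖(w t - (w' t / ω : ℝ) * Complex.I : ℂ)‖ := by
  rw [rotatingState, norm_mul, Complex.norm_exp_ofReal_mul_I, mul_one]

theorem abs_le_norm_rotatingState (w w' : ℝ → ℝ) (ω t : ℝ) :
    |w t| ≤ ‖rotatingState w w' ω t‖ := by
  rw [norm_rotatingState]
  simpa using Complex.abs_re_le_norm (w t - (w' t / ω : ℝ) * Complex.I)

theorem norm_rotatingState_le (w w' : ℝ → ℝ) (ω t : ℝ) :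
    ‖rotatingState w w' ω t‖ ≤ |w t| + |w' t / ω| := by
  rw [norm_rotatingState]
  refine (norm_sub_le _ _).trans_eq ?_
  rw [norm_mul, Complex.norm_I, mul_one, Complex.norm_real, Complex.norm_real, Real.norm_eq_abs,
    Real.norm_eq_abs]

theorem hasDerivAt_rotatingState (hω : ω ≠ 0) {q t : ℝ} (hw : HasDerivAt w (w' t) t)
    (hw' : HasDerivAt w' ((q - ω ^ 2) * w t) t) :
    HasDerivAt (rotatingState w w' ω)
      (-((q / ω * w t : ℝ) * Complex.I) * Complex.exp ((-(ω * t) : ℝ) * Complex.I)) t := by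
  have hstate := hw.ofReal_comp.sub ((hw'.div_const ω).ofReal_comp.mul_const Complex.I)
  have hrotation := ((hasDerivAt_id t).const_mul ω).neg.ofReal_comp.mul_const Complex.I |>.cexp
  refine (hstate.mul hrotation).congr_deriv ?_
  have hω' : (ω : ℂ) ≠ 0 := by exact_mod_cast hω
  simp only [id, Pi.neg_apply, Pi.sub_apply]
  push_cast
  field_simp
  linear_combination w' t * ω * Complex.I_sq

theorem re_rotatingState_sub_mul_exp (w w' : ℝ → ℝ) (ω z : ℝ) :
    ((rotatingState w w' ω z - rotatingState w w' ω 0) *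
      Complex.exp ((ω * z : ℝ) * Complex.I)).re =
      w z - (w 0 * cos (ω * z) + w' 0 / ω * sin (ω * z)) := by
  have hz : rotatingState w w' ω z * Complex.exp ((ω * z : ℝ) * Complex.I) =
      w z - (w' z / ω : ℝ) * Complex.I := by
    simp [rotatingState, mul_assoc, ← Complex.exp_add]
  rw [sub_mul, hz]
  simp [rotatingState, Complex.exp_re, Complex.exp_im]

theorem abs_sub_oscillator_le {q : ℝ → ℝ} {Q z : ℝ} (hω : ω ≠ 0)
    (hw : ∀ t ∈ Set.uIcc 0 z, HasDerivAt w (w' t) t)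
    (hw' : ∀ t ∈ Set.uIcc 0 z, HasDerivAt w' ((q t - ω ^ 2) * w t) t)
    (hq : ∀ t ∈ Set.uIcc 0 z, |q t| ≤ Q) :
    |w z - (w 0 * cos (ω * z) + w' 0 / ω * sin (ω * z))| ≤
      (|w 0| + |w' 0 / ω|) * (exp (Q / |ω| * |z|) - 1) := by
  have hQ : 0 ≤ Q := (abs_nonneg _).trans (hq 0 Set.left_mem_uIcc)
  have hderiv_le : ∀ t ∈ Set.uIcc 0 z,
      ‖-((q t / ω * w t : ℝ) * Complex.I) * Complex.exp ((-(ω * t) : ℝ) * Complex.I)‖ ≤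
        Q / |ω| * ‖rotatingState w w' ω t‖ := fun t ht => by
    rw [norm_mul, Complex.norm_exp_ofReal_mul_I, norm_neg, norm_mul, Complex.norm_I,
      Complex.norm_real, Real.norm_eq_abs, abs_mul, abs_div, mul_one, mul_one]
    gcongr
    · exact hq t ht
    · exact abs_le_norm_rotatingState w w' ω t
  have hstate := norm_sub_le_of_norm_deriv_le_mul_norm (by positivity)
    (fun t ht => hasDerivAt_rotatingState hω (hw t ht) (hw' t ht)) hderiv_le
  rw [sub_zero] at hstate
  have hexp : 0 ≤ exp (Q / |ω| * |z|) - 1 := sub_nonneg.2 (one_le_exp (by positivity))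
  rw [← re_rotatingState_sub_mul_exp w w' ω z]
  calc _ ≤ ‖(rotatingState w w' ω z - rotatingState w w' ω 0) *
        Complex.exp ((ω * z : ℝ) * Complex.I)‖ := Complex.abs_re_le_norm _
    _ = ‖rotatingState w w' ω z - rotatingState w w' ω 0‖ := by
      rw [norm_mul, Complex.norm_exp_ofReal_mul_I, mul_one]
    _ ≤ ‖rotatingState w w' ω 0‖ * (exp (Q / |ω| * |z|) - 1) := hstate
    _ ≤ _ := by gcongr; exact norm_rotatingState_le w w' ω 0

end OscillatorComparison

section HermiteAsymptotics

/-- The amplitude of the oscillation of `hermiteFun n`, read off from its value and its derivative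
`-hermiteFun (n + 1) 0` at the origin, exactly one of which is nonzero. -/
noncomputable def hermiteAmplitude (n : ℕ) : ℝ :=
  hermiteFun n 0 - hermiteFun (n + 1) 0 / √(n + 1 / 2)

theorem hermiteAmplitude_ne_zero (n : ℕ) : hermiteAmplitude n ≠ 0 := by
  have hω : √((n : ℝ) + 1 / 2) ≠ 0 := by positivity
  rcases Nat.even_or_odd n with hn | hn
  · have hsucc := (hermiteFun_apply_zero_eq_zero_iff (n + 1)).2 hn.add_one
    simpa [hermiteAmplitude, hsucc, hermiteFun_apply_zero_eq_zero_iff] using hn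
  · have hzero := (hermiteFun_apply_zero_eq_zero_iff n).2 hn
    have hsucc := mt (hermiteFun_apply_zero_eq_zero_iff (n + 1)).1 (by simpa using hn.add_one)
    simpa [hermiteAmplitude, hzero, hsucc] using hω

theorem hermiteFun_zero_mul_cos_add (n : ℕ) (θ : ℝ) :
    hermiteFun n 0 * cos θ + -hermiteFun (n + 1) 0 / √(n + 1 / 2) * sin θ =
      hermiteAmplitude n * cos (θ - (n % 2 : ℕ) * (π / 2)) := by
  rcases Nat.even_or_odd n with hn | hn
  · have hsucc := (hermiteFun_apply_zero_eq_zero_iff (n + 1)).2 hn.add_one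
    simp [hermiteAmplitude, hsucc, Nat.even_iff.1 hn]
  · have hzero := (hermiteFun_apply_zero_eq_zero_iff n).2 hn
    simp [hermiteAmplitude, hzero, Nat.odd_iff.1 hn, cos_sub_pi_div_two, neg_div]

theorem abs_hermiteFun_zero_add_abs (n : ℕ) :
    |hermiteFun n 0| + |-hermiteFun (n + 1) 0 / √(n + 1 / 2)| = |hermiteAmplitude n| := by
  rcases Nat.even_or_odd n with hn | hn
  · have hsucc := (hermiteFun_apply_zero_eq_zero_iff (n + 1)).2 hn.add_one
    simp [hermiteAmplitude, hsucc]
  · have hzero := (hermiteFun_apply_zero_eq_zero_iff n).2 hn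
    simp [hermiteAmplitude, hzero, neg_div]

theorem abs_hermiteFun_div_amplitude_sub_cos_le (n : ℕ) (z : ℝ) :
    |hermiteFun n z / hermiteAmplitude n - cos (√(n + 1 / 2) * z - (n % 2 : ℕ) * (π / 2))| ≤
      exp (z ^ 2 / 4 / √(n + 1 / 2) * |z|) - 1 := by
  have hω : 0 < √((n : ℝ) + 1 / 2) := by positivity
  have hsq_le : ∀ t ∈ Set.uIcc 0 z, |t ^ 2 / 4| ≤ z ^ 2 / 4 := fun t ht => by
    have habs : |t| ≤ |z| := by simpa using Set.abs_sub_left_of_mem_uIcc ht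
    rw [abs_of_nonneg (by positivity)]
    gcongr ?_ / 4
    exact sq_le_sq.2 habs
  have hcomparison := abs_sub_oscillator_le hω.ne' (fun t _ => hasDerivAt_hermiteFun n t)
    (fun t _ => by rw [sq_sqrt (by positivity)]; exact hasDerivAt_deriv_hermiteFun n t) hsq_le
  simp only [zero_div, zero_mul, zero_sub] at hcomparison
  rw [hermiteFun_zero_mul_cos_add, abs_hermiteFun_zero_add_abs, abs_of_pos hω] at hcomparison
  rwa [div_sub' (hermiteAmplitude_ne_zero n), abs_div,
    div_le_iff₀' (abs_pos.2 (hermiteAmplitude_ne_zero n))]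

theorem tendsto_hermiteFun_div_amplitude_sub_cos (z : ℝ) :
    Tendsto (fun n : ℕ => hermiteFun n z / hermiteAmplitude n -
      cos (√(n + 1 / 2) * z - (n % 2 : ℕ) * (π / 2))) atTop (nhds 0) := by
  refine squeeze_zero_norm (fun n => abs_hermiteFun_div_amplitude_sub_cos_le n z) ?_
  have hω : Tendsto (fun n : ℕ => √((n : ℝ) + 1 / 2)) atTop atTop :=
    tendsto_sqrt_atTop.comp (tendsto_atTop_add_const_right _ _ tendsto_natCast_atTop_atTop)
  have hexponent := (hω.const_div_atTop (z ^ 2 / 4)).mul_const |z|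
  rw [zero_mul] at hexponent
  simpa using ((continuous_exp.tendsto 0).comp hexponent).sub_const 1

end HermiteAsymptotics

section NaturalDensity

/-- `S` has natural density `d`: the proportion of elements of `S` among the first `N` natural
numbers tends to `d`. -/
def HasNaturalDensity (S : Set ℕ) (d : ℝ) : Prop :=
  Tendsto (fun N : ℕ => (((Finset.range N).filter (· ∈ S)).card : ℝ) / N) atTop (nhds d)

theorem count_eq_count_even_add_count_odd (P : ℕ → Prop) [DecidablePred P] (N : ℕ) :
    Nat.count P N =
      Nat.count (fun k => P (2 * k)) (N - N / 2) + Nat.count (fun k => P (2 * k + 1)) (N / 2) := by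
  induction N with
  | zero => simp
  | succ N ih =>
    rw [Nat.count_succ, ih]
    obtain ⟨k, rfl | rfl⟩ := N.even_or_odd'
    · rw [show 2 * k - 2 * k / 2 = k by lia, show 2 * k / 2 = k by lia,
        show 2 * k + 1 - (2 * k + 1) / 2 = k + 1 by lia, show (2 * k + 1) / 2 = k by lia,
        Nat.count_succ, add_right_comm]
    · rw [show 2 * k + 1 - (2 * k + 1) / 2 = k + 1 by lia, show (2 * k + 1) / 2 = k by lia,
        show 2 * k + 1 + 1 - (2 * k + 1 + 1) / 2 = k + 1 by lia,
        show (2 * k + 1 + 1) / 2 = k + 1 by lia, Nat.count_succ (fun k => P (2 * k + 1)), add_assoc]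

theorem HasNaturalDensity.tendsto_count_div {S : Set ℕ} {d r : ℝ} (hS : HasNaturalDensity S d)
    {M : ℕ → ℕ} (hM : Tendsto M atTop atTop)
    (hratio : Tendsto (fun N => (M N : ℝ) / N) atTop (nhds r)) :
    Tendsto (fun N => (Nat.count (· ∈ S) (M N) : ℝ) / N) atTop (nhds (d * r)) := by
  refine ((hS.comp hM).mul hratio).congr fun N => ?_
  rw [Function.comp_apply, ← Nat.count_eq_card_filter_range]
  rcases eq_or_ne (M N) 0 with hzero | hne
  · simp [hzero]
  · field_simp

theorem HasNaturalDensity.of_even_of_odd {S : Set ℕ} {a b : ℝ}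
    (heven : HasNaturalDensity {k | 2 * k ∈ S} a)
    (hodd : HasNaturalDensity {k | 2 * k + 1 ∈ S} b) : HasNaturalDensity S ((a + b) / 2) := by
  have hfloor : Tendsto (fun N : ℕ => ((N / 2 : ℕ) : ℝ) / N) atTop (nhds (1 / 2)) := by
    refine ((tendsto_nat_floor_mul_div_atTop (R := ℝ) one_half_pos.le).comp
      tendsto_natCast_atTop_atTop).congr fun N => ?_
    simp [inv_mul_eq_div, Nat.floor_div_ofNat]
  have hceil : Tendsto (fun N : ℕ => ((N - N / 2 : ℕ) : ℝ) / N) atTop (nhds (1 / 2)) := by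
    rw [← sub_half]
    refine (hfloor.const_sub 1).congr' ((eventually_ne_atTop 0).mono fun N hN => ?_)
    simp only [Nat.cast_sub (N.div_le_self 2)]
    field_simp
  have hfloor_atTop : Tendsto (fun N => N / 2) atTop atTop :=
    Nat.tendsto_div_const_atTop two_ne_zero
  have hceil_atTop : Tendsto (fun N => N - N / 2) atTop atTop :=
    tendsto_atTop_mono (fun N => by lia) hfloor_atTop
  have hsum := (heven.tendsto_count_div hceil_atTop hceil).add
    (hodd.tendsto_count_div hfloor_atTop hfloor)
  rw [← add_mul, mul_one_div] at hsum
  refine hsum.congr fun N => ?_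
  rw [← Nat.count_eq_card_filter_range, count_eq_count_even_add_count_odd (· ∈ S), Nat.cast_add,
    add_div]
  simp only [Set.mem_ofPred_eq]

end NaturalDensity

section EmpiricalMeasure

open scoped ENNReal

variable {E F : Type*} [MeasurableSpace E] [MeasurableSpace F]

/-- The uniform distribution on the values `u 0, …, u N`, counted with multiplicity. -/
noncomputable def empiricalMeasure (u : ℕ → E) (N : ℕ) : ProbabilityMeasure E :=
  ⟨((N + 1 : ℕ) : ℝ≥0∞)⁻¹ • ∑ k ∈ Finset.range (N + 1), Measure.dirac (u k), ⟨by
    simp [ENNReal.inv_mul_cancel (Nat.cast_add_one_ne_zero N)]⟩⟩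

theorem integral_empiricalMeasure {G : Type*} [NormedAddCommGroup G] [NormedSpace ℝ G]
    [CompleteSpace G] (u : ℕ → E) (N : ℕ) {f : E → G} (hf : StronglyMeasurable f) :
    ∫ e, f e ∂(empiricalMeasure u N : Measure E) =
      ((N + 1 : ℕ) : ℝ)⁻¹ • ∑ k ∈ Finset.range (N + 1), f (u k) := by
  have hdirac (k : ℕ) : Integrable f (Measure.dirac (u k)) := integrable_dirac' hf enorm_lt_top
  simp only [empiricalMeasure, ProbabilityMeasure.coe_mk]
  rw [integral_smul_measure, integral_finsetSum_measure fun k _ => hdirac k,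
    ENNReal.toReal_inv, ENNReal.toReal_natCast]
  simp only [integral_dirac' _ _ hf]

theorem empiricalMeasure_real (u : ℕ → E) (N : ℕ) {s : Set E} (hs : MeasurableSet s) :
    (empiricalMeasure u N : Measure E).real s =
      ((Finset.range (N + 1)).filter (fun k => u k ∈ s)).card / ((N + 1 : ℕ) : ℝ) := by
  rw [← integral_indicator_one hs,
    integral_empiricalMeasure u N (stronglyMeasurable_one.indicator hs), smul_eq_mul,
    inv_mul_eq_div]
  simp [Set.indicator_apply]

theorem map_empiricalMeasure {f : E → F} (hf : Measurable f) (u : ℕ → E) (N : ℕ) :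
    (empiricalMeasure u N).map hf.aemeasurable = empiricalMeasure (f ∘ u) N := by
  ext s hs
  rw [ProbabilityMeasure.toMeasure_map, Measure.map_apply hf hs]
  simp [empiricalMeasure, Measure.dirac_apply' _ (hf hs), Measure.dirac_apply' _ hs,
    Set.indicator_apply]

end EmpiricalMeasure

section AsymptoticDistribution

variable {E F : Type*} [MeasurableSpace E] [TopologicalSpace E]

/-- `u` is asymptotically distributed according to `μ`: its empirical measures converge weakly to
`μ`. -/
def HasAsymptoticDistribution [OpensMeasurableSpace E] (u : ℕ → E)
    (μ : ProbabilityMeasure E) : Prop :=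
  Tendsto (empiricalMeasure u) atTop (nhds μ)

theorem HasAsymptoticDistribution.map [OpensMeasurableSpace E] [TopologicalSpace F]
    [MeasurableSpace F] [BorelSpace F] {u : ℕ → E} {μ : ProbabilityMeasure E}
    (hu : HasAsymptoticDistribution u μ) {f : E → F} (hf : Continuous f) :
    HasAsymptoticDistribution (f ∘ u) (μ.map hf.measurable.aemeasurable) := by
  refine (ProbabilityMeasure.tendsto_map_of_tendsto_of_continuous _ _ hu hf).congr fun N => ?_
  exact map_empiricalMeasure hf.measurable u N

theorem HasAsymptoticDistribution.hasNaturalDensity [OpensMeasurableSpace E]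
    [HasOuterApproxClosed E] {u : ℕ → E} {μ : ProbabilityMeasure E}
    (hu : HasAsymptoticDistribution u μ) {s : Set E} (hs : MeasurableSet s)
    (hfrontier : (μ : Measure E) (frontier s) = 0) :
    HasNaturalDensity {k | u k ∈ s} ((μ : Measure E).real s) := by
  have hlim := (ENNReal.continuousAt_toReal (measure_ne_top _ s)).tendsto.comp
    (ProbabilityMeasure.tendsto_measure_of_null_frontier_of_tendsto' hu hfrontier)
  refine (tendsto_add_atTop_iff_nat 1).1 (hlim.congr fun N => ?_)
  exact empiricalMeasure_real u N hs

theorem HasAsymptoticDistribution.of_tendsto_dist {X : Type*} [PseudoMetricSpace X]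
    [MeasurableSpace X] [OpensMeasurableSpace X] {u v : ℕ → X} {μ : ProbabilityMeasure X}
    (hu : HasAsymptoticDistribution u μ)
    (huv : Tendsto (fun k => dist (u k) (v k)) atTop (nhds 0)) :
    HasAsymptoticDistribution v μ := by
  have hu' := tendsto_iff_forall_lipschitz_integral_tendsto.1 hu
  refine tendsto_iff_forall_lipschitz_integral_tendsto.2 fun f hf_bdd ⟨L, hL⟩ => ?_
  have hf : StronglyMeasurable f := hL.continuous.stronglyMeasurable
  have hdiff : Tendsto (fun k => f (v k) - f (u k)) atTop (nhds 0) := by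
    refine squeeze_zero_norm (fun k => ?_) (by simpa using huv.const_mul (L : ℝ))
    rw [← dist_eq_norm, dist_comm]
    exact hL.dist_le_mul _ _
  have haverage := (tendsto_add_atTop_iff_nat 1).2 hdiff.cesaro
  have hsum := (hu' f hf_bdd ⟨L, hL⟩).add haverage
  simp only [integral_empiricalMeasure _ _ hf, add_zero, smul_eq_mul, ← mul_add,
    ← Finset.sum_add_distrib, add_sub_cancel] at hsum ⊢
  exact hsum

theorem tendsto_probabilityMeasure_of_dense_span {ι X 𝕜 : Type*} [RCLike 𝕜] [TopologicalSpace X]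
    [CompactSpace X] [MeasurableSpace X] [OpensMeasurableSpace X] {l : Filter ι}
    {ν : ι → ProbabilityMeasure X} {μ : ProbabilityMeasure X} {S : Set C(X, 𝕜)}
    (hS : (Submodule.span 𝕜 S).topologicalClosure = ⊤)
    (h : ∀ f ∈ S, Tendsto (fun i => ∫ x, f x ∂(ν i : Measure X)) l
      (nhds (∫ x, f x ∂(μ : Measure X)))) :
    Tendsto ν l (nhds μ) := by
  have hint (ρ : ProbabilityMeasure X) (f : C(X, 𝕜)) : Integrable f (ρ : Measure X) :=
    (BoundedContinuousFunction.mkOfCompact f).integrable _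
  have hlipschitz (ρ : ProbabilityMeasure X) :
      LipschitzWith 1 fun f : C(X, 𝕜) => ∫ x, f x ∂(ρ : Measure X) :=
    LipschitzWith.of_dist_le_mul fun f g => by
      rw [dist_eq_norm, dist_eq_norm, ← integral_sub (hint ρ f) (hint ρ g)]
      simpa using norm_integral_le_of_norm_le_const (μ := (ρ : Measure X))
        (ae_of_all _ fun x => (f - g).norm_coe_le_norm x)
  let V : Submodule 𝕜 C(X, 𝕜) :=
    { carrier := {f | Tendsto (fun i => ∫ x, f x ∂(ν i : Measure X)) l
        (nhds (∫ x, f x ∂(μ : Measure X)))}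
      zero_mem' := by simpa using tendsto_const_nhds
      add_mem' := fun {f g} hf hg => by
        simpa [fun ρ => integral_add (hint ρ f) (hint ρ g)] using Tendsto.add hf hg
      smul_mem' := fun c f hf => by
        simpa [integral_const_mul] using Tendsto.const_mul c hf }
  have hclosed : IsClosed (V : Set C(X, 𝕜)) :=
    (LipschitzWith.uniformEquicontinuous _ 1 fun i => hlipschitz (ν i)).equicontinuous
      |>.isClosed_setOfPred_tendsto (hlipschitz μ).continuous
  have htop : ⊤ ≤ V := hS ▸ Submodule.topologicalClosure_minimal _ (Submodule.span_le.2 h) hclosed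
  exact (ProbabilityMeasure.tendsto_iff_forall_integral_rclike_tendsto 𝕜).2
    fun f => htop (Submodule.mem_top (x := f.toContinuousMap))

end AsymptoticDistribution

section Equidistribution

/-- The rotation-invariant probability measure on the circle of length `T`. -/
noncomputable def haarProbability (T : ℝ) [Fact (0 < T)] : ProbabilityMeasure (AddCircle T) :=
  ⟨AddCircle.haarAddCircle, inferInstance⟩

/-- The sequence `x` is equidistributed modulo `T`. -/
def EquidistributedMod (T : ℝ) [Fact (0 < T)] (x : ℕ → ℝ) : Prop :=
  HasAsymptoticDistribution (fun k => (x k : AddCircle T)) (haarProbability T)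

variable {T : ℝ} [hT : Fact (0 < T)] {x : ℕ → ℝ}

theorem integral_fourier_eq_zero {n : ℤ} (hn : n ≠ 0) :
    ∫ t : AddCircle T, fourier n t ∂AddCircle.haarAddCircle = 0 :=
  integral_eq_zero_of_add_right_eq_neg (fourier_add_half_inv_index hn hT.out)

theorem equidistributedMod_of_tendsto_average_exp
    (h : ∀ n : ℤ, n ≠ 0 → Tendsto (fun N : ℕ => (N : ℝ)⁻¹ •
      ∑ k ∈ Finset.range N, Complex.exp (2 * π * Complex.I * n * x k / T)) atTop (nhds 0)) :
    EquidistributedMod T x := by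
  refine tendsto_probabilityMeasure_of_dense_span span_fourier_closure_eq_top ?_
  rintro - ⟨n, rfl⟩
  rcases eq_or_ne n 0 with rfl | hn
  · simp
  simp only [integral_empiricalMeasure _ _ (fourier n).continuous.stronglyMeasurable,
    haarProbability, ProbabilityMeasure.coe_mk, integral_fourier_eq_zero hn, fourier_coe_apply]
  exact (tendsto_add_atTop_iff_nat 1).2 (h n hn)

theorem haarAddCircle_real_apply {s : Set (AddCircle T)} (hs : MeasurableSet s) :
    AddCircle.haarAddCircle.real s =
      T⁻¹ * volume.real ({t : ℝ | (t : AddCircle T) ∈ s} ∩ Set.Ioc 0 T) := by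
  have hpre := (AddCircle.measurePreserving_mk T 0).measureReal_preimage hs.nullMeasurableSet
  rw [← integral_indicator_one hs, AddCircle.integral_haarAddCircle, integral_indicator_one hs,
    ← hpre, measureReal_restrict_apply (AddCircle.measurable_mk' hs), zero_add, smul_eq_mul]
  rfl

theorem EquidistributedMod.hasNaturalDensity (hx : EquidistributedMod T x) {E : Type*}
    [PseudoMetricSpace E] [MeasurableSpace E] [BorelSpace E] {f : ℝ → E} (hf : Continuous f)
    (hperiodic : Function.Periodic f T) {v : ℕ → E}
    (hv : Tendsto (fun k => dist (f (x k)) (v k)) atTop (nhds 0)) {s : Set E}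
    (hs : MeasurableSet s) (hfrontier : ∀ᵐ t, f t ∉ frontier s) :
    HasNaturalDensity {k | v k ∈ s} (T⁻¹ * volume.real ({t | f t ∈ s} ∩ Set.Ioc 0 T)) := by
  let g : AddCircle T → E := hperiodic.lift
  have hg : Continuous g := continuous_coinduced_dom.2 hf
  have hlaw {A : Set E} (hA : MeasurableSet A) :
      ((haarProbability T).map hg.measurable.aemeasurable : Measure E).real A =
        T⁻¹ * volume.real ({t | f t ∈ A} ∩ Set.Ioc 0 T) := by
    rw [ProbabilityMeasure.toMeasure_map, map_measureReal_apply hg.measurable hA]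
    exact haarAddCircle_real_apply (hg.measurable hA)
  rw [← hlaw hs]
  refine ((HasAsymptoticDistribution.map hx hg).of_tendsto_dist hv).hasNaturalDensity hs ?_
  have hnull : volume ({t | f t ∈ frontier s} ∩ Set.Ioc 0 T) = 0 :=
    measure_mono_null (fun t ht => not_not.2 ht.1) hfrontier
  rw [← measureReal_eq_zero_iff, hlaw isClosed_frontier.measurableSet, measureReal_def, hnull,
    ENNReal.toReal_zero, mul_zero]

end Equidistribution

section Fejer

theorem norm_sum_smul_sub_sub_le {E : Type*} [SeminormedAddCommGroup E] [NormedSpace ℝ E]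
    {s : ℕ → ℝ} {e : ℕ → E} (hs : Monotone s) (hs0 : 0 ≤ s 0) (he : ∀ k, ‖e k‖ ≤ 1) (N : ℕ) :
    ‖∑ k ∈ Finset.range N, s k • (e (k + 1) - e k) - s N • e N‖ ≤ s N := by
  induction N with
  | zero => simpa [norm_smul, abs_of_nonneg hs0] using mul_le_of_le_one_right hs0 (he 0)
  | succ N ih =>
    have hstep : ‖(s N - s (N + 1)) • e (N + 1)‖ ≤ s (N + 1) - s N := by
      rw [norm_smul, norm_sub_rev, Real.norm_of_nonneg (sub_nonneg.2 (hs N.le_succ))]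
      exact mul_le_of_le_one_right (sub_nonneg.2 (hs N.le_succ)) (he _)
    calc ‖∑ k ∈ Finset.range (N + 1), s k • (e (k + 1) - e k) - s (N + 1) • e (N + 1)‖
        = ‖(∑ k ∈ Finset.range N, s k • (e (k + 1) - e k) - s N • e N) +
            (s N - s (N + 1)) • e (N + 1)‖ := by
          rw [Finset.sum_range_succ]
          congr 1
          module
      _ ≤ s N + (s (N + 1) - s N) := norm_add_le_of_le ih hstep
      _ = s (N + 1) := by ring

theorem tendsto_average_smul_sub {E : Type*} [SeminormedAddCommGroup E] [NormedSpace ℝ E]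
    {s : ℕ → ℝ} {e : ℕ → E} (hs : Monotone s) (hs0 : 0 ≤ s 0) (he : ∀ k, ‖e k‖ ≤ 1)
    (hlim : Tendsto (fun N : ℕ => s N / N) atTop (nhds 0)) :
    Tendsto (fun N : ℕ => (N : ℝ)⁻¹ • ∑ k ∈ Finset.range N, s k • (e (k + 1) - e k))
      atTop (nhds 0) := by
  refine squeeze_zero_norm (fun N => ?_) (by simpa using hlim.const_mul 2)
  have hsN : 0 ≤ s N := hs0.trans (hs N.zero_le)
  have hsum : ‖∑ k ∈ Finset.range N, s k • (e (k + 1) - e k)‖ ≤ s N + s N :=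
    calc _ ≤ ‖∑ k ∈ Finset.range N, s k • (e (k + 1) - e k) - s N • e N‖ + ‖s N • e N‖ :=
          norm_le_norm_sub_add _ _
      _ ≤ s N + s N := by
          refine add_le_add (norm_sum_smul_sub_sub_le hs hs0 he N) ?_
          rw [norm_smul, Real.norm_of_nonneg hsN]
          exact mul_le_of_le_one_right hsN (he N)
  calc _ ≤ (N : ℝ)⁻¹ * (s N + s N) := by
        rw [norm_smul, norm_inv, Real.norm_natCast]
        gcongr
    _ = 2 * (s N / N) := by ring

theorem tendsto_exp_sub_one_div {ι : Type*} {l : Filter ι} {z : ι → ℂ} (hz : Tendsto z l (nhds 0))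
    (hz0 : ∀ i, z i ≠ 0) : Tendsto (fun i => (Complex.exp (z i) - 1) / z i) l (nhds 1) := by
  have hslope := (Complex.hasDerivAt_exp 0).tendsto_slope_zero
  simp only [zero_add, Complex.exp_zero, smul_eq_mul, inv_mul_eq_div] at hslope
  exact hslope.comp (tendsto_nhdsWithin_iff.2 ⟨hz, .of_forall hz0⟩)

variable {x : ℕ → ℝ}

theorem pos_of_antitone_of_tendsto_mul_atTop {δ : ℕ → ℝ} (hanti : Antitone δ)
    (hlim : Tendsto (fun k : ℕ => k * δ k) atTop atTop) (k : ℕ) : 0 < δ k := by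
  obtain ⟨n, hpos, hkn⟩ := ((hlim.eventually_gt_atTop 0).and (eventually_ge_atTop k)).exists
  exact (pos_of_mul_pos_right hpos n.cast_nonneg).trans_le (hanti hkn)

theorem tendsto_exp_sub_difference_quotient {c : ℝ} (hc : c ≠ 0)
    (hne : ∀ k, x (k + 1) - x k ≠ 0) (hzero : Tendsto (fun k => x (k + 1) - x k) atTop (nhds 0)) :
    Tendsto (fun k => Complex.exp ((c * x k : ℝ) * Complex.I) -
      (c * Complex.I)⁻¹ * (x (k + 1) - x k)⁻¹ •
        (Complex.exp ((c * x (k + 1) : ℝ) * Complex.I) - Complex.exp ((c * x k : ℝ) * Complex.I)))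
      atTop (nhds 0) := by
  set z : ℕ → ℂ := fun k => c * Complex.I * (x (k + 1) - x k : ℝ) with hz
  have hz_ne (k : ℕ) : z k ≠ 0 := mul_ne_zero
    (mul_ne_zero (by exact_mod_cast hc) Complex.I_ne_zero) (by exact_mod_cast hne k)
  have hz_lim : Tendsto z atTop (nhds 0) := by
    simpa [hz] using ((Complex.continuous_ofReal.tendsto 0).comp hzero).const_mul (c * Complex.I)
  have hslope := (tendsto_exp_sub_one_div hz_lim hz_ne).const_sub 1
  rw [sub_self] at hslope
  refine squeeze_zero_norm (fun k => ?_) (tendsto_zero_iff_norm_tendsto_zero.1 hslope)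
  have hsucc : Complex.exp ((c * x (k + 1) : ℝ) * Complex.I) =
      Complex.exp ((c * x k : ℝ) * Complex.I) * Complex.exp (z k) := by
    rw [← Complex.exp_add, hz]
    congr 1
    push_cast
    ring
  have hfactor : Complex.exp ((c * x k : ℝ) * Complex.I) - (c * Complex.I)⁻¹ *
      (x (k + 1) - x k)⁻¹ • (Complex.exp ((c * x (k + 1) : ℝ) * Complex.I) -
        Complex.exp ((c * x k : ℝ) * Complex.I)) =
      Complex.exp ((c * x k : ℝ) * Complex.I) * (1 - (Complex.exp (z k) - 1) / z k) := by
    rw [hsucc, hz, Complex.real_smul, Complex.ofReal_inv, div_eq_mul_inv, mul_inv]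
    ring
  rw [hfactor, norm_mul, Complex.norm_exp_ofReal_mul_I, one_mul]

theorem tendsto_average_exp_of_antitone_sub {c : ℝ} (hc : c ≠ 0)
    (hanti : Antitone fun k => x (k + 1) - x k)
    (hzero : Tendsto (fun k => x (k + 1) - x k) atTop (nhds 0))
    (hinfty : Tendsto (fun k : ℕ => k * (x (k + 1) - x k)) atTop atTop) :
    Tendsto (fun N : ℕ => (N : ℝ)⁻¹ •
      ∑ k ∈ Finset.range N, Complex.exp ((c * x k : ℝ) * Complex.I)) atTop (nhds 0) := by
  have hpos := pos_of_antitone_of_tendsto_mul_atTop hanti hinfty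
  have hsum := tendsto_average_smul_sub (s := fun k => (x (k + 1) - x k)⁻¹)
    (e := fun k => Complex.exp ((c * x k : ℝ) * Complex.I))
    (fun k l hkl => inv_anti₀ (hpos l) (hanti hkl)) (inv_nonneg.2 (hpos 0).le)
    (fun k => (Complex.norm_exp_ofReal_mul_I _).le)
    (hinfty.inv_tendsto_atTop.congr fun N => by simp [mul_comm, div_eq_mul_inv])
  have herror := (tendsto_exp_sub_difference_quotient hc (fun k => (hpos k).ne') hzero).cesaro_smul
  have hadd := herror.add (hsum.const_mul (c * Complex.I)⁻¹)
  rw [mul_zero, add_zero] at hadd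
  refine hadd.congr fun N => ?_
  rw [mul_smul_comm, ← smul_add, Finset.mul_sum, ← Finset.sum_add_distrib]
  simp only [sub_add_cancel]

theorem equidistributedMod_const_mul_of_antitone_sub {T : ℝ} [hT : Fact (0 < T)] {c : ℝ}
    (hc : c ≠ 0) (hanti : Antitone fun k => x (k + 1) - x k)
    (hzero : Tendsto (fun k => x (k + 1) - x k) atTop (nhds 0))
    (hinfty : Tendsto (fun k : ℕ => k * (x (k + 1) - x k)) atTop atTop) :
    EquidistributedMod T fun k => c * x k := by
  refine equidistributedMod_of_tendsto_average_exp fun n hn => ?_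
  have hfreq : 2 * π * n / T * c ≠ 0 := by
    have := hT.out.ne'
    have : (n : ℝ) ≠ 0 := Int.cast_ne_zero.2 hn
    positivity
  refine (tendsto_average_exp_of_antitone_sub hfreq hanti hzero hinfty).congr fun N => ?_
  congr! 3
  push_cast
  ring

theorem equidistributedMod_mul_sqrt {T : ℝ} [Fact (0 < T)] {a b c : ℝ} (ha : 0 < a) (hb : 0 < b)
    (hc : c ≠ 0) : EquidistributedMod T fun k => c * √(a * k + b) := by
  have hsub (k : ℕ) : √(a * (k + 1 : ℕ) + b) - √(a * k + b) =
      a / (√(a * (k + 1 : ℕ) + b) + √(a * k + b)) := by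
    have : 0 < √(a * k + b) := by positivity
    rw [eq_div_iff (by positivity), mul_comm, ← sq_sub_sq, sq_sqrt (by positivity),
      sq_sqrt (by positivity)]
    push_cast
    ring
  have hlim : Tendsto (fun k : ℕ => √(a * (k + 1 : ℕ) + b)) atTop atTop :=
    tendsto_sqrt_atTop.comp <| tendsto_atTop_add_const_right _ _ <|
      (tendsto_natCast_atTop_atTop.comp (tendsto_add_atTop_nat 1)).const_mul_atTop ha
  refine equidistributedMod_const_mul_of_antitone_sub hc ?_ ?_ ?_ <;> simp only [hsub]
  · intro k l hkl
    dsimp only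
    gcongr
  · exact (hlim.atTop_add_nonneg fun k => sqrt_nonneg _).const_div_atTop a
  · have hlower := (hlim.atTop_div_const two_pos).atTop_add
      (hlim.const_div_atTop (-((a + b) / 2)))
    refine tendsto_atTop_mono (fun k => ?_) hlower
    have : 0 < √(a * (k + 1 : ℕ) + b) := by positivity
    have hsq := sq_sqrt (show 0 ≤ a * (k + 1 : ℕ) + b by positivity)
    calc √(a * (k + 1 : ℕ) + b) / 2 + -((a + b) / 2) / √(a * (k + 1 : ℕ) + b)
        = k * (a / (√(a * (k + 1 : ℕ) + b) + √(a * (k + 1 : ℕ) + b))) := by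
          field_simp
          rw [hsq]
          push_cast
          ring
      _ ≤ k * (a / (√(a * (k + 1 : ℕ) + b) + √(a * k + b))) := by
          gcongr
          exact k.le_succ

end Fejer

section Sign

theorem sgn_neg (t : ℝ) : sgn (-t) = -sgn t := by
  grind [sgn]

theorem sgn_mul (s t : ℝ) : sgn (s * t) = sgn s * sgn t := by
  have h (u : ℝ) : sgn u = SignType.sign u := by
    simp only [sgn, sign_apply]
    split_ifs <;> simp
  simp [h, sign_mul]

theorem sgn_of_pos {t : ℝ} (ht : 0 < t) : sgn t = 1 := if_pos ht

theorem sgn_eq_zero_iff {t : ℝ} : sgn t = 0 ↔ t = 0 := by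
  grind [sgn]

theorem sgn_div_eq_sgn_div_iff {r s t : ℝ} (hr : r ≠ 0) :
    sgn (s / r) = sgn (t / r) ↔ sgn s = sgn t := by
  rw [div_eq_mul_inv, div_eq_mul_inv, sgn_mul, sgn_mul,
    mul_left_inj' (sgn_eq_zero_iff.not.2 (inv_ne_zero hr))]

theorem abs_sgn_le_one (t : ℝ) : |sgn t| ≤ 1 := by
  unfold sgn
  split_ifs <;> simp

theorem measurable_sgn : Measurable sgn :=
  Measurable.ite measurableSet_Ioi measurable_const
    (Measurable.ite measurableSet_Iio measurable_const measurable_const)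

theorem indicator_sgn_eq {s t : ℝ} (hs : s ≠ 0) (ht : t ≠ 0) :
    (if sgn s = sgn t then (1 : ℝ) else 0) = (1 + sgn s * sgn t) / 2 := by
  rcases hs.lt_or_gt with hs | hs <;> rcases ht.lt_or_gt with ht | ht <;>
    norm_num [sgn, hs, ht, hs.not_gt, ht.not_gt]

theorem eventually_sgn_eq {t : ℝ} (ht : t ≠ 0) : ∀ᶠ s in nhds t, sgn s = sgn t := by
  rcases ht.lt_or_gt with h | h
  · filter_upwards [eventually_lt_nhds h] with s hs
    simp [sgn, h, hs, h.not_gt, hs.not_gt]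
  · filter_upwards [eventually_gt_nhds h] with s hs
    simp [sgn, h, hs]

theorem notMem_frontier_setOf_sgn_eq {p : ℝ × ℝ} (hfst : p.1 ≠ 0) (hsnd : p.2 ≠ 0) :
    p ∉ frontier {q : ℝ × ℝ | sgn q.1 = sgn q.2} := by
  have hconst : ∀ᶠ q : ℝ × ℝ in nhds p, sgn q.1 = sgn p.1 ∧ sgn q.2 = sgn p.2 :=
    (continuous_fst.continuousAt.eventually (eventually_sgn_eq hfst)).and
      (continuous_snd.continuousAt.eventually (eventually_sgn_eq hsnd))
  rintro ⟨hclosure, hinterior⟩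
  obtain ⟨r, hr, hr_fst, hr_snd⟩ :=
    ((mem_closure_iff_frequently.1 hclosure).and_eventually hconst).exists
  refine hinterior (mem_interior_iff_mem_nhds.2 (hconst.mono fun q ⟨hq_fst, hq_snd⟩ => ?_))
  calc sgn q.1 = sgn r.1 := hq_fst.trans hr_fst.symm
    _ = sgn r.2 := hr
    _ = sgn q.2 := hr_snd.trans hq_snd.symm

end Sign

section SquareWave

/-- The correlation of the square waves `t ↦ sgn (cos (t - p))` and `t ↦ sgn (cos (m t - p))`:
the mean of their product over a period. -/
noncomputable def squareWaveCorrelation (m : ℤ) (p : ℝ) : ℝ :=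
  (2 * π)⁻¹ * ∫ t in 0..2 * π, sgn (cos (t - p)) * sgn (cos (m * t - p))

theorem ae_cos_mul_sub_ne_zero {a : ℝ} (ha : a ≠ 0) (p : ℝ) : ∀ᵐ t : ℝ, cos (a * t - p) ≠ 0 := by
  have hcountable : (Set.range fun k : ℤ => ((2 * k + 1) * π / 2 + p) / a).Countable :=
    Set.countable_range _
  filter_upwards [hcountable.ae_notMem volume] with t ht hcos
  obtain ⟨k, hk⟩ := cos_eq_zero_iff.1 hcos
  exact ht ⟨k, (div_eq_iff ha).2 (by linarith)⟩

theorem intervalIntegrable_sgn_comp {f : ℝ → ℝ} (hf : Measurable f) (a b : ℝ) :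
    IntervalIntegrable (fun t => sgn (f t)) volume a b :=
  (intervalIntegrable_const (c := (1 : ℝ))).mono_fun
    (measurable_sgn.comp hf).aestronglyMeasurable
    (ae_of_all _ fun t => by simpa using abs_sgn_le_one (f t))

theorem measureReal_sgn_cos_eq {m : ℤ} (hm : m ≠ 0) (p : ℝ) :
    (2 * π)⁻¹ * volume.real ({t | sgn (cos (t - p)) = sgn (cos (m * t - p))} ∩ Set.Ioc 0 (2 * π)) =
      (1 + squareWaveCorrelation m p) / 2 := by
  have hmeas : MeasurableSet {t | sgn (cos (t - p)) = sgn (cos (m * t - p))} :=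
    measurableSet_eq_fun (measurable_sgn.comp (by fun_prop)) (measurable_sgn.comp (by fun_prop))
  have hproduct := intervalIntegrable_sgn_comp
    (f := fun t => cos (t - p) * cos (m * t - p)) (by fun_prop) 0 (2 * π)
  have hvolume : volume.real ({t | sgn (cos (t - p)) = sgn (cos (m * t - p))} ∩
      Set.Ioc 0 (2 * π)) = ∫ t in 0..2 * π, (1 + sgn (cos (t - p) * cos (m * t - p))) / 2 := by
    rw [← measureReal_restrict_apply hmeas, ← integral_indicator_one hmeas,
      intervalIntegral.integral_of_le two_pi_pos.le]
    refine integral_congr_ae (ae_restrict_of_ae ?_)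
    filter_upwards [ae_cos_mul_sub_ne_zero one_ne_zero p,
      ae_cos_mul_sub_ne_zero (Int.cast_ne_zero.2 hm) p] with t hcos hcos_mul
    rw [one_mul] at hcos
    rw [sgn_mul, ← indicator_sgn_eq hcos hcos_mul]
    rfl
  rw [hvolume, intervalIntegral.integral_div, intervalIntegral.integral_add (by simp) hproduct]
  simp only [squareWaveCorrelation, sgn_mul, intervalIntegral.integral_const, sub_zero,
    smul_eq_mul, mul_one]
  rw [← mul_div_assoc, mul_add, inv_mul_cancel₀ two_pi_pos.ne']

theorem integral_eq_zero_of_antiperiodic {f : ℝ → ℝ} {c : ℝ} (hf : Function.Antiperiodic f c) :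
    ∫ t in 0..2 * c, f t = 0 := by
  have hshift : ∫ t in 0..2 * c, f (t + c) = ∫ t in 0..2 * c, f t := by
    rw [intervalIntegral.integral_comp_add_right, zero_add, add_comm,
      hf.periodic_two_mul.intervalIntegral_add_eq c 0, zero_add]
  rw [funext hf, intervalIntegral.integral_neg] at hshift
  linarith

theorem squareWaveCorrelation_eq_zero_of_even {m : ℤ} (hm : Even m) (p : ℝ) :
    squareWaveCorrelation m p = 0 := by
  obtain ⟨q, rfl⟩ := hm
  refine mul_eq_zero_of_right _ (integral_eq_zero_of_antiperiodic fun t => ?_)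
  have hperiod : ((q + q : ℤ) : ℝ) * (t + π) - p = ((q + q : ℤ) : ℝ) * t - p + q * (2 * π) := by
    push_cast
    ring
  rw [hperiod, cos_add_int_mul_two_pi, add_sub_right_comm, cos_add_pi, sgn_neg, neg_mul]

theorem squareWaveCorrelation_zero_eq_integral_shift (m : ℤ) :
    squareWaveCorrelation m 0 = (2 * π)⁻¹ *
      ∫ t in 0..2 * π, sgn (cos (t - π / 2)) * sgn (cos (m * (t - π / 2))) := by
  have hperiodic : Function.Periodic (fun t => sgn (cos t) * sgn (cos (m * t))) (2 * π) :=
    fun t => by simp only [cos_add_two_pi, mul_add, cos_add_int_mul_two_pi]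
  have hshift := hperiodic.intervalIntegral_add_eq 0 (-(π / 2))
  rw [intervalIntegral.integral_comp_sub_right (fun t => sgn (cos t) * sgn (cos (m * t))),
    squareWaveCorrelation]
  simp only [sub_zero, zero_sub, zero_add, neg_add_eq_sub] at hshift ⊢
  rw [hshift]

theorem squareWaveCorrelation_zero_of_mod_four_eq_one {m : ℤ} (hm : m % 4 = 1) :
    squareWaveCorrelation m 0 = squareWaveCorrelation m (π / 2) := by
  obtain ⟨q, rfl⟩ : ∃ q, m = 4 * q + 1 := ⟨m / 4, by lia⟩
  rw [squareWaveCorrelation_zero_eq_integral_shift, squareWaveCorrelation]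
  congr! 5 with t
  rw [← cos_sub_int_mul_two_pi (((4 * q + 1 : ℤ) : ℝ) * t - π / 2) q]
  congr 1
  push_cast
  ring

theorem squareWaveCorrelation_zero_of_mod_four_eq_three {m : ℤ} (hm : m % 4 = 3) :
    squareWaveCorrelation m 0 = -squareWaveCorrelation m (π / 2) := by
  obtain ⟨q, rfl⟩ : ∃ q, m = 4 * q + 3 := ⟨m / 4, by lia⟩
  rw [squareWaveCorrelation_zero_eq_integral_shift, squareWaveCorrelation, ← mul_neg,
    ← intervalIntegral.integral_neg]
  congr! 3 with t
  rw [← mul_neg, ← sgn_neg, ← cos_sub_pi,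
    ← cos_sub_int_mul_two_pi (((4 * q + 3 : ℤ) : ℝ) * t - π / 2 - π) q]
  congr 3
  push_cast
  ring

theorem integral_sgn_sin_zero_pi : ∫ t in 0..π, sgn (sin t) = π := by
  have hone : ∫ t in 0..π, sgn (sin t) = ∫ _ in 0..π, (1 : ℝ) :=
    intervalIntegral.integral_congr_Ioo_of_le pi_pos.le fun t ht =>
      sgn_of_pos (sin_pos_of_mem_Ioo ht)
  simpa using hone

theorem integral_sgn_sin_zero_int_mul_pi {m : ℤ} (hm : Odd m) :
    ∫ t in 0..m * π, sgn (sin t) = π := by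
  obtain ⟨q, rfl⟩ := hm
  have hanti : Function.Antiperiodic (fun t => sgn (sin t)) π := fun t => by
    simp only [sin_add_pi, sgn_neg]
  have hintble := intervalIntegrable_sgn_comp measurable_sin
  have hperiods : ∫ t in π..π + q • (2 * π), sgn (sin t) = 0 := by
    rw [hanti.periodic_two_mul.intervalIntegral_add_zsmul_eq q π hintble,
      hanti.periodic_two_mul.intervalIntegral_add_eq π 0, zero_add,
      integral_eq_zero_of_antiperiodic hanti, smul_zero]
  have hendpoint : ((2 * q + 1 : ℤ) : ℝ) * π = π + q • (2 * π) := by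
    rw [zsmul_eq_mul]
    push_cast
    ring
  rw [hendpoint, ← intervalIntegral.integral_add_adjacent_intervals (hintble 0 π) (hintble π _),
    integral_sgn_sin_zero_pi, hperiods, add_zero]

theorem squareWaveCorrelation_pi_div_two_of_odd {m : ℤ} (hm : Odd m) :
    squareWaveCorrelation m (π / 2) = 1 / m := by
  have hm0 : (m : ℝ) ≠ 0 := Int.cast_ne_zero.2 fun h => by simp [h] at hm
  have hperiodic : Function.Periodic (fun t => sgn (sin t * sin (m * t))) π := fun t => by
    simp only [mul_add, sin_add_int_mul_pi, hm.neg_one_zpow, sin_add_pi, neg_one_mul, neg_mul_neg]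
  have hintble := intervalIntegrable_sgn_comp (f := fun t => sin t * sin (m * t)) (by fun_prop)
  have hhalf : ∫ t in 0..π, sgn (sin t * sin (m * t)) = π / m :=
    calc ∫ t in 0..π, sgn (sin t * sin (m * t)) = ∫ t in 0..π, sgn (sin (m * t)) :=
          intervalIntegral.integral_congr_Ioo_of_le pi_pos.le fun t ht => by
            rw [sgn_mul, sgn_of_pos (sin_pos_of_mem_Ioo ht), one_mul]
      _ = π / m := by
          rw [intervalIntegral.integral_comp_mul_left (fun t => sgn (sin t)) hm0, mul_zero,
            integral_sgn_sin_zero_int_mul_pi hm, smul_eq_mul, inv_mul_eq_div]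
  have hfull : ∫ t in 0..2 * π, sgn (sin t * sin (m * t)) = 2 * (π / m) := by
    rw [two_mul π, ← intervalIntegral.integral_add_adjacent_intervals (hintble 0 π) (hintble π _),
      hperiodic.intervalIntegral_add_eq π 0, zero_add, hhalf, two_mul]
  simp only [squareWaveCorrelation, cos_sub_pi_div_two, ← sgn_mul, hfull]
  field_simp

theorem squareWaveCorrelation_zero_add_pi_div_two (m : ℤ) :
    squareWaveCorrelation m 0 + squareWaveCorrelation m (π / 2) =
      if m % 4 = 1 then 2 / (m : ℝ) else 0 := by
  split_ifs with h
  · rw [squareWaveCorrelation_zero_of_mod_four_eq_one h,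
      squareWaveCorrelation_pi_div_two_of_odd (Int.odd_iff.2 (by lia))]
    ring
  · rcases m.even_or_odd with heven | hodd
    · rw [squareWaveCorrelation_eq_zero_of_even heven, squareWaveCorrelation_eq_zero_of_even heven,
        add_zero]
    · rw [squareWaveCorrelation_zero_of_mod_four_eq_three (by grind), neg_add_cancel]

end SquareWave

section SignAgreement

theorem EquidistributedMod.hasNaturalDensity_sgn_eq [Fact (0 < 2 * π)] {x : ℕ → ℝ}
    (hx : EquidistributedMod (2 * π) x) {m : ℤ} (hm : m ≠ 0) (p : ℝ) {a b : ℕ → ℝ}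
    (ha : Tendsto (fun k => a k - cos (x k - p)) atTop (nhds 0))
    (hb : Tendsto (fun k => b k - cos (m * x k - p)) atTop (nhds 0)) :
    HasNaturalDensity {k | sgn (a k) = sgn (b k)} ((1 + squareWaveCorrelation m p) / 2) := by
  have hperiodic : Function.Periodic (fun t => (cos (t - p), cos (m * t - p))) (2 * π) :=
    fun t => by
      simp only [add_sub_right_comm, cos_add_two_pi, mul_add, cos_add_int_mul_two_pi]
  have hdist : Tendsto (fun k => dist (cos (x k - p), cos (m * x k - p)) (a k, b k)) atTop
      (nhds 0) := by
    simpa only [Prod.dist_eq, dist_comm (cos _), Real.dist_eq, abs_zero, max_self] using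
      ha.abs.max hb.abs
  have hmeas : MeasurableSet {q : ℝ × ℝ | sgn q.1 = sgn q.2} :=
    measurableSet_eq_fun (measurable_sgn.comp measurable_fst) (measurable_sgn.comp measurable_snd)
  have hfrontier : ∀ᵐ t : ℝ,
      (cos (t - p), cos (m * t - p)) ∉ frontier {q : ℝ × ℝ | sgn q.1 = sgn q.2} := by
    filter_upwards [ae_cos_mul_sub_ne_zero one_ne_zero p,
      ae_cos_mul_sub_ne_zero (Int.cast_ne_zero.2 hm) p] with t hcos hcos_mul
    rw [one_mul] at hcos
    exact notMem_frontier_setOf_sgn_eq hcos hcos_mul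
  have hdensity := hx.hasNaturalDensity (by fun_prop) hperiodic hdist hmeas hfrontier
  simp only [Set.mem_ofPred_eq, measureReal_sgn_cos_eq hm] at hdensity
  exact hdensity

theorem tendsto_hermiteFun_div_amplitude_sub_cos_of_lt_two (z : ℝ) {r : ℕ} (hr : r < 2) :
    Tendsto (fun k : ℕ => hermiteFun (2 * k + r) z / hermiteAmplitude (2 * k + r) -
      cos (z * √(2 * k + (r + 1 / 2)) - r * (π / 2))) atTop (nhds 0) := by
  have hindex : Tendsto (fun k => 2 * k + r) atTop atTop :=
    tendsto_atTop_mono (fun k => show k ≤ 2 * k + r by lia) tendsto_id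
  refine ((tendsto_hermiteFun_div_amplitude_sub_cos z).comp hindex).congr fun k => ?_
  have hparity : (2 * k + r) % 2 = r := by lia
  rw [Function.comp_apply, hparity, mul_comm z, ← add_assoc]
  push_cast
  rfl

theorem hasNaturalDensity_sgn_hermiteFun_eq_of_lt_two {z : ℝ} (hz : z ≠ 0) {m : ℤ} (hm : m ≠ 0)
    {r : ℕ} (hr : r < 2) :
    HasNaturalDensity
      {k | sgn (hermiteFun (2 * k + r) z) = sgn (hermiteFun (2 * k + r) (m * z))}
      ((1 + squareWaveCorrelation m (r * (π / 2))) / 2) := by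
  have : Fact (0 < 2 * π) := ⟨two_pi_pos⟩
  have hequidistributed : EquidistributedMod (2 * π) fun k => z * √(2 * k + (r + 1 / 2)) :=
    equidistributedMod_mul_sqrt two_pos (by positivity) hz
  have hdensity := hequidistributed.hasNaturalDensity_sgn_eq hm (r * (π / 2))
    (tendsto_hermiteFun_div_amplitude_sub_cos_of_lt_two z hr)
    (by simpa only [mul_assoc] using
      tendsto_hermiteFun_div_amplitude_sub_cos_of_lt_two (m * z) hr)
  simpa only [sgn_div_eq_sgn_div_iff (hermiteAmplitude_ne_zero _)] using hdensity

theorem hasNaturalDensity_sgn_hermiteFun_eq {z : ℝ} (hz : z ≠ 0) {m : ℤ} (hm : m ≠ 0) :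
    HasNaturalDensity {n | sgn (hermiteFun n z) = sgn (hermiteFun n (m * z))}
      (if m % 4 = 1 then 1 / 2 + 1 / (2 * (m : ℝ)) else 1 / 2) := by
  have hdensity := (hasNaturalDensity_sgn_hermiteFun_eq_of_lt_two hz hm two_pos).of_even_of_odd
    (S := {n | sgn (hermiteFun n z) = sgn (hermiteFun n (m * z))})
    (hasNaturalDensity_sgn_hermiteFun_eq_of_lt_two hz hm one_lt_two)
  convert hdensity using 1
  have hcorrelation := squareWaveCorrelation_zero_add_pi_div_two m
  rw [Nat.cast_zero, zero_mul, Nat.cast_one, one_mul]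
  split_ifs at hcorrelation ⊢
  · rw [show 1 / (2 * (m : ℝ)) = 2 / m / 4 by ring, ← hcorrelation]
    ring
  · linarith

end SignAgreement

theorem hermite_sign_correlation
    (x y : ℝ) (hx : x ≠ 0) (hy : y ≠ 0)
    (m : ℤ) (hm : m ≠ 0) (hxy : y = (m : ℝ) * x) :
    Tendsto (fun N : ℕ =>
      (((Finset.range N).filter (fun n => sgn (ψ n x) = sgn (ψ n y))).card : ℝ) / N)
      atTop (nhds (if m % 4 = 1 then 1/2 + 1/(2 * (m : ℝ)) else 1/2)) := by
  have hz : 2 * √π * x ≠ 0 := mul_ne_zero (by positivity) hx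
  have hmul : m * (2 * √π * x) = 2 * √π * y := by
    rw [hxy]
    ring
  have hdensity := hasNaturalDensity_sgn_hermiteFun_eq hz hm
  simp only [HasNaturalDensity, Set.mem_ofPred_eq, hmul, ← ψ_eq_hermiteFun] at hdensity
  convert hdensity
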